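/- arXiv:math/0403509 — 2 statements merged into one kernel-verified Lean document; each statement's English description precedes it below -/
import Mathlib

section
/- Let (G,*) be a right group. Then for all x,y ∈ G, (x*y)⁻¹ = y⁻¹ * x⁻¹. -/
/-!
Every idempotent `e` of a right group is a left identity, because `e * 1 = e * (e * e⁻¹) = 1`.
Applied to `x⁻¹ * x`, this makes left multiplication by `x` injective, so right inverses are unique;
and `y⁻¹ * x⁻¹` is a right inverse of `x * y`.
-/

/-- A right group: a semigroup with a left identity `1` and a right inverse `x⁻¹` of each `x` with
respect to `1`. The identity is data, since it need not be unique: a right-zero semigroup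
(`x * y = y`) is a right group for each choice of `1`. -/
class RightGroup (G : Type*) extends Semigroup G, One G, Inv G where
  one_mul (x : G) : 1 * x = x
  mul_inv_cancel (x : G) : x * x⁻¹ = 1

namespace RightGroup

variable {G : Type*} [RightGroup G]

theorem mul_inv_cancel_left (x y : G) : x * (x⁻¹ * y) = y := by
  rw [← mul_assoc, mul_inv_cancel, one_mul]

theorem mul_eq_right_of_isIdempotentElem {e : G} (he : IsIdempotentElem e) (x : G) :
    e * x = x := by
  have mul_one_eq_one : e * 1 = 1 := by
    rw [← mul_inv_cancel e, ← mul_assoc, he.eq]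
  calc
    e * x = e * 1 * x := by rw [mul_assoc, one_mul]
    _ = x := by rw [mul_one_eq_one, one_mul]

theorem isIdempotentElem_inv_mul_self (x : G) : IsIdempotentElem (x⁻¹ * x) := by
  rw [IsIdempotentElem, mul_assoc, mul_inv_cancel_left]

theorem inv_mul_cancel_left (x y : G) : x⁻¹ * (x * y) = y := by
  rw [← mul_assoc, mul_eq_right_of_isIdempotentElem (isIdempotentElem_inv_mul_self x)]

instance : IsLeftCancelMul G where
  mul_left_cancel x := Function.LeftInverse.injective (inv_mul_cancel_left x)

theorem inv_eq_of_mul_eq_one_right {x y : G} (h : x * y = 1) : x⁻¹ = y :=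
  mul_left_cancel ((mul_inv_cancel x).trans h.symm)

theorem mul_inv_rev (x y : G) : (x * y)⁻¹ = y⁻¹ * x⁻¹ := by
  apply inv_eq_of_mul_eq_one_right
  rw [mul_assoc, mul_inv_cancel_left, mul_inv_cancel]

end RightGroup

/-- In a right group, `(x*y)⁻¹ = y⁻¹ * x⁻¹` for all `x, y`. -/
theorem rightGroup_inv_mul {G : Type*} (mul : G → G → G) (one : G) (inv : G → G)
    (assoc : ∀ x y z : G, mul (mul x y) z = mul x (mul y z))
    (one_mul : ∀ x : G, mul one x = x)
    (mul_inv : ∀ x : G, mul x (inv x) = one) :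
    ∀ x y : G, inv (mul x y) = mul (inv y) (inv x) :=
  letI : RightGroup G :=
    { mul := mul
      mul_assoc := assoc
      one := one
      inv := inv
      one_mul := one_mul
      mul_inv_cancel := mul_inv }
  RightGroup.mul_inv_rev
end

section
/- Let (G,⊢,⊣,1,⁻¹) be a digroup and define conjugation by x∘y := x⊢(y⊣x⁻¹). Then for all x,y,z ∈ G: x∘(y∘z) = (x⊢y)∘z = (x⊣y)∘z, and moreover 1∘x = x and x∘1 = 1. -/
/-- A digroup: a set `G` with two associative operations `⊢` (`lhd`) and `⊣` (`dhv`),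
a distinguished bar-unit `one`, and an inversion `inv`, satisfying the digroup
axioms (G1)–(G6). -/
class Digroup (G : Type*) where
  lhd : G → G → G           -- `x ⊢ y`
  dhv : G → G → G           -- `x ⊣ y`
  one : G
  inv : G → G
  lhd_assoc : ∀ x y z : G, lhd (lhd x y) z = lhd x (lhd y z)
  dhv_assoc : ∀ x y z : G, dhv (dhv x y) z = dhv x (dhv y z)
  G2 : ∀ x y z : G, lhd x (dhv y z) = dhv (lhd x y) z
  G3 : ∀ x y z : G, dhv x (lhd y z) = dhv x (dhv y z)
  G4 : ∀ x y z : G, lhd (dhv x y) z = lhd (lhd x y) z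
  one_lhd : ∀ x : G, lhd one x = x
  dhv_one : ∀ x : G, dhv x one = x
  lhd_inv : ∀ x : G, lhd x (inv x) = one
  inv_dhv : ∀ x : G, dhv (inv x) x = one

open Digroup

/-- Conjugation in a digroup: `x ∘ y := x ⊢ (y ⊣ x⁻¹)`. -/
def Digroup.conj {G : Type*} [Digroup G] (x y : G) : G := lhd x (dhv y (inv x))

/-!
Right multiplication by `y⁻¹` under `⊣` undoes right multiplication by `y`, and `1 ⊣ y⁻¹ = y⁻¹`.
Hence `x ⊣ y = 1` already forces `x = y⁻¹`, and since `⊣` does not distinguish `x ⊢ y` from `x ⊣ y`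
on its right, both products have the inverse `y⁻¹ ⊣ x⁻¹`.
-/

namespace Digroup

variable {G : Type*} [Digroup G]

theorem dhv_inv_cancel_right (x y : G) : dhv (dhv x y) (inv y) = x := by
  rw [dhv_assoc, ← G3, lhd_inv, dhv_one]

theorem inv_dhv_cancel_right (x y : G) : dhv (dhv x (inv y)) y = x := by
  rw [dhv_assoc, inv_dhv, dhv_one]

theorem one_dhv_inv (x : G) : dhv one (inv x) = inv x := by
  rw [← inv_dhv x, dhv_inv_cancel_right]

theorem eq_inv_of_dhv_eq_one {x y : G} (h : dhv x y = one) : x = inv y := by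
  rw [← dhv_inv_cancel_right x y, h, one_dhv_inv]

theorem inv_one : inv (one : G) = one :=
  (eq_inv_of_dhv_eq_one (dhv_one one)).symm

theorem dhv_inv_rev (x y : G) : inv (dhv x y) = dhv (inv y) (inv x) := by
  refine (eq_inv_of_dhv_eq_one ?_).symm
  rw [← dhv_assoc, inv_dhv_cancel_right, inv_dhv]

theorem inv_lhd_eq_inv_dhv (x y : G) : inv (lhd x y) = inv (dhv x y) := by
  refine eq_inv_of_dhv_eq_one ?_
  rw [← G3, inv_dhv]

theorem lhd_inv_rev (x y : G) : inv (lhd x y) = dhv (inv y) (inv x) := by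
  rw [inv_lhd_eq_inv_dhv, dhv_inv_rev]

theorem conj_conj (x y z : G) : conj x (conj y z) = conj (lhd x y) z :=
  calc
    lhd x (dhv (lhd y (dhv z (inv y))) (inv x))
    _ = lhd x (lhd y (dhv (dhv z (inv y)) (inv x))) := by rw [← G2 y]
    _ = lhd (lhd x y) (dhv z (dhv (inv y) (inv x))) := by rw [lhd_assoc, dhv_assoc]
    _ = lhd (lhd x y) (dhv z (inv (lhd x y))) := by rw [lhd_inv_rev]

theorem conj_lhd_eq_conj_dhv (x y z : G) : conj (lhd x y) z = conj (dhv x y) z := by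
  rw [conj, conj, G4, inv_lhd_eq_inv_dhv]

theorem one_conj (x : G) : conj one x = x := by
  rw [conj, one_lhd, inv_one, dhv_one]

theorem conj_one (x : G) : conj x one = one := by
  rw [conj, one_dhv_inv, lhd_inv]

end Digroup

/-- In a digroup with conjugation `x∘y := x⊢(y⊣x⁻¹)`, one has
`x∘(y∘z) = (x⊢y)∘z = (x⊣y)∘z`, together with `1∘x = x` and `x∘1 = 1`. -/
theorem digroup_conj_props {G : Type*} [Digroup G] :
    (∀ x y z : G, conj x (conj y z) = conj (lhd x y) z) ∧
    (∀ x y z : G, conj (lhd x y) z = conj (dhv x y) z) ∧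
    (∀ x : G, conj one x = x) ∧
    (∀ x : G, conj x one = one) :=
  ⟨conj_conj, conj_lhd_eq_conj_dhv, one_conj, conj_one⟩
end
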